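/- arXiv:1406.5877 — 3 statements merged into one kernel-verified Lean document; each statement's English description precedes it below -/
import Mathlib

section
/- The third-order equation of motion (35) of the semi-classical spinning particle is locally variational: fix parameters (s⁰, 𝐬) ∈ ℝ × ℝ³ with (s⁰, 𝐬) ≠ 0 and m ∈ ℝ, and let 𝐄 be the ℝ³-valued expression of equation (35) in the context. Then every point (t₀, x₀, v₀, v′₀) ∈ ℝ × ℝ³ × ℝ³ × ℝ³ with Δ(v₀) > 0 has an open neighborhood U and a smooth function L = L(t,x,v,v′) on U such that for every smooth curve c : I → ℝ³ whose prolongation (t, c(t), ċ(t), c̈(t)) lies in U, the Euler–Poisson expressions of L satisfy E_a[L,c](t) = 𝐄_a(ċ(t), c̈(t), c⃛(t)) for all a and t. -/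
noncomputable section

/-- Partial derivative in `t` of a function `F(t,x,v)` on `ℝ × ℝ^q × ℝ^q`. -/
def pdt {q : ℕ} (F : ℝ → (Fin q → ℝ) → (Fin q → ℝ) → ℝ)
    (t : ℝ) (x v : Fin q → ℝ) : ℝ :=
  deriv (fun s => F s x v) t

/-- Partial derivative in `x^a` of a function `F(t,x,v)`. -/
def pdx {q : ℕ} (a : Fin q) (F : ℝ → (Fin q → ℝ) → (Fin q → ℝ) → ℝ)
    (t : ℝ) (x v : Fin q → ℝ) : ℝ :=
  deriv (fun s : ℝ => F t (x + s • (Pi.single a 1 : Fin q → ℝ)) v) 0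

/-- Partial derivative in `v^a` of a function `F(t,x,v)`. -/
def pdv {q : ℕ} (a : Fin q) (F : ℝ → (Fin q → ℝ) → (Fin q → ℝ) → ℝ)
    (t : ℝ) (x v : Fin q → ℝ) : ℝ :=
  deriv (fun s : ℝ => F t x (v + s • (Pi.single a 1 : Fin q → ℝ))) 0

/-- The total-derivative operator `D₁ = ∂_t + v^a ∂_{x^a}`. -/
def D1 {q : ℕ} (F : ℝ → (Fin q → ℝ) → (Fin q → ℝ) → ℝ) :
    ℝ → (Fin q → ℝ) → (Fin q → ℝ) → ℝ :=
  fun t x v => pdt F t x v + ∑ a, v a * pdx a F t x v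

/-- Partial derivative in `x^a` of a Lagrange function `L(t,x,v,v′)`. -/
def pLx {q : ℕ} (a : Fin q) (L : ℝ → (Fin q → ℝ) → (Fin q → ℝ) → (Fin q → ℝ) → ℝ)
    (t : ℝ) (x v w : Fin q → ℝ) : ℝ :=
  deriv (fun s : ℝ => L t (x + s • (Pi.single a 1 : Fin q → ℝ)) v w) 0

/-- Partial derivative in `v^a` of a Lagrange function `L(t,x,v,v′)`. -/
def pLv {q : ℕ} (a : Fin q) (L : ℝ → (Fin q → ℝ) → (Fin q → ℝ) → (Fin q → ℝ) → ℝ)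
    (t : ℝ) (x v w : Fin q → ℝ) : ℝ :=
  deriv (fun s : ℝ => L t x (v + s • (Pi.single a 1 : Fin q → ℝ)) w) 0

/-- Partial derivative in `v′^a` of a Lagrange function `L(t,x,v,v′)`. -/
def pLw {q : ℕ} (a : Fin q) (L : ℝ → (Fin q → ℝ) → (Fin q → ℝ) → (Fin q → ℝ) → ℝ)
    (t : ℝ) (x v w : Fin q → ℝ) : ℝ :=
  deriv (fun s : ℝ => L t x v (w + s • (Pi.single a 1 : Fin q → ℝ))) 0

/-- The Euler–Poisson (Euler–Lagrange) expressions
`E_a[L,c](t) = ∂L/∂x^a − (d/dt)(∂L/∂v^a) + (d²/dt²)(∂L/∂v′^a)` of a second-order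
Lagrange function `L(t,x,v,v′)` along a curve `c`, all partial derivatives evaluated
along the prolonged curve `t ↦ (t, c(t), ċ(t), c̈(t))`. -/
def eulerPoisson {q : ℕ} (L : ℝ → (Fin q → ℝ) → (Fin q → ℝ) → (Fin q → ℝ) → ℝ)
    (c : ℝ → (Fin q → ℝ)) (t : ℝ) (a : Fin q) : ℝ :=
  pLx a L t (c t) (deriv c t) (deriv (deriv c) t)
    - deriv (fun τ => pLv a L τ (c τ) (deriv c τ) (deriv (deriv c) τ)) t
    + deriv (deriv (fun τ => pLw a L τ (c τ) (deriv c τ) (deriv (deriv c) τ))) t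

/-- The third-order expression (20):
`E_a = A_{ab} v″^b + v′^c (∂A_{ab}/∂v^c) v′^b + B_{ab} v′^b + c_a`. -/
def expr20 {q : ℕ} (A B : Fin q → Fin q → ℝ → (Fin q → ℝ) → (Fin q → ℝ) → ℝ)
    (cc : Fin q → ℝ → (Fin q → ℝ) → (Fin q → ℝ) → ℝ)
    (a : Fin q) (t : ℝ) (x v v' v'' : Fin q → ℝ) : ℝ :=
  (∑ b, A a b t x v * v'' b)
    + (∑ c, ∑ b, v' c * pdv c (A a b) t x v * v' b)
    + (∑ b, B a b t x v * v' b) + cc a t x v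

/-- The Helmholtz-type conditions (21) on a triple `(A,B,c)`, imposed at every point of
a set `Ω ⊆ ℝ × ℝ^q × ℝ^q`.  Square (round) brackets in the paper denote
antisymmetrization (symmetrization) with weight `1/k!`, written out explicitly here. -/
def cond21On {q : ℕ} (Ω : Set (ℝ × (Fin q → ℝ) × (Fin q → ℝ)))
    (A B : Fin q → Fin q → ℝ → (Fin q → ℝ) → (Fin q → ℝ) → ℝ)
    (cc : Fin q → ℝ → (Fin q → ℝ) → (Fin q → ℝ) → ℝ) : Prop :=
  ∀ p ∈ Ω, ∀ a b c : Fin q,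
    -- (i)  ∂_{v^{[a}} A_{bc]} = 0
    (pdv a (A b c) p.1 p.2.1 p.2.2 - pdv b (A a c) p.1 p.2.1 p.2.2
      - pdv c (A b a) p.1 p.2.1 p.2.2 - pdv a (A c b) p.1 p.2.1 p.2.2
      + pdv b (A c a) p.1 p.2.1 p.2.2 + pdv c (A a b) p.1 p.2.1 p.2.2) / 6 = 0 ∧
    -- (ii)  2 B_{[ab]} − 3 D₁ A_{ab} = 0
    2 * ((B a b p.1 p.2.1 p.2.2 - B b a p.1 p.2.1 p.2.2) / 2)
      - 3 * D1 (A a b) p.1 p.2.1 p.2.2 = 0 ∧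
    -- (iii)  2 ∂_{v^{[a}} B_{b]c} − 4 ∂_{x^{[a}} A_{b]c} + ∂_{x^c} A_{ab}
    --        + 2 D₁ ∂_{v^c} A_{ab} = 0
    2 * ((pdv a (B b c) p.1 p.2.1 p.2.2 - pdv b (B a c) p.1 p.2.1 p.2.2) / 2)
      - 4 * ((pdx a (A b c) p.1 p.2.1 p.2.2 - pdx b (A a c) p.1 p.2.1 p.2.2) / 2)
      + pdx c (A a b) p.1 p.2.1 p.2.2
      + 2 * D1 (pdv c (A a b)) p.1 p.2.1 p.2.2 = 0 ∧
    -- (iv)  ∂_{v^{(a}} c_{b)} − D₁ B_{(ab)} = 0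
    (pdv a (cc b) p.1 p.2.1 p.2.2 + pdv b (cc a) p.1 p.2.1 p.2.2) / 2
      - D1 (fun t x v => (B a b t x v + B b a t x v) / 2) p.1 p.2.1 p.2.2 = 0 ∧
    -- (v)  2 ∂_{v^c} ∂_{v^{[a}} c_{b]} − 4 ∂_{x^{[a}} B_{b]c} + D₁² ∂_{v^c} A_{ab}
    --      + 6 D₁ ∂_{x^{[a}} A_{bc]} = 0
    2 * pdv c (fun t x v => (pdv a (cc b) t x v - pdv b (cc a) t x v) / 2)
          p.1 p.2.1 p.2.2
      - 4 * ((pdx a (B b c) p.1 p.2.1 p.2.2 - pdx b (B a c) p.1 p.2.1 p.2.2) / 2)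
      + D1 (D1 (pdv c (A a b))) p.1 p.2.1 p.2.2
      + 6 * D1 (fun t x v =>
          (pdx a (A b c) t x v - pdx b (A a c) t x v - pdx c (A b a) t x v
            - pdx a (A c b) t x v + pdx b (A c a) t x v + pdx c (A a b) t x v) / 6)
          p.1 p.2.1 p.2.2 = 0 ∧
    -- (vi)  4 ∂_{x^{[a}} c_{b]} − 2 D₁ ∂_{v^{[a}} c_{b]} − D₁³ A_{ab} = 0
    4 * ((pdx a (cc b) p.1 p.2.1 p.2.2 - pdx b (cc a) p.1 p.2.1 p.2.2) / 2)
      - 2 * D1 (fun t x v => (pdv a (cc b) t x v - pdv b (cc a) t x v) / 2)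
          p.1 p.2.1 p.2.2
      - D1 (D1 (D1 (A a b))) p.1 p.2.1 p.2.2 = 0

open Matrix

/-- `Δ(v) = (1 + v·v)(s⁰² + 𝐬·𝐬) − (s⁰ + 𝐬·v)²`. -/
def sDelta (s0 : ℝ) (s v : Fin 3 → ℝ) : ℝ :=
  (1 + v ⬝ᵥ v) * (s0 ^ 2 + s ⬝ᵥ s) - (s0 + s ⬝ᵥ v) ^ 2

/-- The third-order expression (35) of the semi-classical spinning particle. -/
def spinE (s0 : ℝ) (s : Fin 3 → ℝ) (m : ℝ) (v v' v'' : Fin 3 → ℝ) : Fin 3 → ℝ :=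
  (sDelta s0 s v ^ ((3 : ℝ) / 2))⁻¹ • crossProduct v'' (s - s0 • v)
    - (3 * ((s0 ^ 2 + s ⬝ᵥ s) * (v' ⬝ᵥ v) - (s0 + s ⬝ᵥ v) * (s ⬝ᵥ v'))
        / sDelta s0 s v ^ ((5 : ℝ) / 2)) • crossProduct v' (s - s0 • v)
    + (m / ((1 + v ⬝ᵥ v) ^ ((3 : ℝ) / 2) * (s0 ^ 2 + s ⬝ᵥ s) ^ ((3 : ℝ) / 2))) •
        ((1 + v ⬝ᵥ v) • v' - (v' ⬝ᵥ v) • v)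


/-! ### Auxiliary quantities for the explicit Lagrangian -/

/-- The polarization of `sDelta`: `⟨V∧s, V₀∧s⟩`. -/
def bet (s0 : ℝ) (s v0 v : Fin 3 → ℝ) : ℝ :=
  (1 + v ⬝ᵥ v0) * (s0 ^ 2 + s ⬝ᵥ s) - (s0 + s ⬝ᵥ v) * (s0 + s ⬝ᵥ v0)

/-- Numerator of the vector potential. -/
def qv (s0 : ℝ) (s v0 v : Fin 3 → ℝ) : Fin 3 → ℝ := crossProduct (s - s0 • v) (v0 - v)

/-- Derivative of `sDelta`. -/
def dDel (s0 : ℝ) (s v w : Fin 3 → ℝ) : ℝ :=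
  2 * ((s0 ^ 2 + s ⬝ᵥ s) * (w ⬝ᵥ v) - (s0 + s ⬝ᵥ v) * (s ⬝ᵥ w))

/-- Derivative of `bet`. -/
def dBet (s0 : ℝ) (s v0 w : Fin 3 → ℝ) : ℝ :=
  (w ⬝ᵥ v0) * (s0 ^ 2 + s ⬝ᵥ s) - (s ⬝ᵥ w) * (s0 + s ⬝ᵥ v0)

/-- Derivative of `qv`. -/
def dqv (s0 : ℝ) (s v0 w : Fin 3 → ℝ) : Fin 3 → ℝ :=
  - crossProduct s w - s0 • crossProduct w v0

/-- The factor `√Δ √Δ₀ + β`. -/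
def kap (s0 : ℝ) (s v0 v : Fin 3 → ℝ) : ℝ :=
  √(sDelta s0 s v) * √(sDelta s0 s v0) + bet s0 s v0 v

/-- The vector potential. -/
def pot (s0 : ℝ) (s v0 v : Fin 3 → ℝ) : Fin 3 → ℝ :=
  fun a => qv s0 s v0 v a / (√(sDelta s0 s v) * kap s0 s v0 v)

/-- Its directional derivative. -/
def dpot (s0 : ℝ) (s v0 v w : Fin 3 → ℝ) (a : Fin 3) : ℝ :=
  (dqv s0 s v0 w a * (√(sDelta s0 s v) * kap s0 s v0 v)
    - qv s0 s v0 v a * (dDel s0 s v w / (2 * √(sDelta s0 s v)) * kap s0 s v0 v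
      + √(sDelta s0 s v) * (dDel s0 s v w / (2 * √(sDelta s0 s v)) * √(sDelta s0 s v0)
        + dBet s0 s v0 w))) / (√(sDelta s0 s v) * kap s0 s v0 v) ^ 2

lemma hasDerivAt_sDelta {s0 : ℝ} {s : Fin 3 → ℝ} {g : ℝ → Fin 3 → ℝ} {w : Fin 3 → ℝ} {t : ℝ}
    (h : HasDerivAt g w t) : HasDerivAt (fun τ => sDelta s0 s (g τ)) (dDel s0 s (g t) w) t := by
  have h0 := hasDerivAt_pi.1 h 0
  have h1 := hasDerivAt_pi.1 h 1
  have h2 := hasDerivAt_pi.1 h 2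
  simp only [sDelta, dDel, dotProduct, Fin.sum_univ_three]
  have A := ((((h0.mul h0).add (h1.mul h1)).add (h2.mul h2)).const_add 1).mul_const
    (s0 ^ 2 + (s 0 * s 0 + s 1 * s 1 + s 2 * s 2))
  have B := (((((h0.const_mul (s 0)).add (h1.const_mul (s 1))).add
    (h2.const_mul (s 2))).const_add s0).pow 2)
  refine (A.sub B).congr_deriv ?_
  simp
  ring

lemma hasDerivAt_bet {s0 : ℝ} {s v0 : Fin 3 → ℝ} {g : ℝ → Fin 3 → ℝ} {w : Fin 3 → ℝ} {t : ℝ}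
    (h : HasDerivAt g w t) : HasDerivAt (fun τ => bet s0 s v0 (g τ)) (dBet s0 s v0 w) t := by
  have h0 := hasDerivAt_pi.1 h 0
  have h1 := hasDerivAt_pi.1 h 1
  have h2 := hasDerivAt_pi.1 h 2
  simp only [bet, dBet, dotProduct, Fin.sum_univ_three]
  have A := ((((h0.mul_const (v0 0)).add (h1.mul_const (v0 1))).add
    (h2.mul_const (v0 2))).const_add 1).mul_const
    (s0 ^ 2 + (s 0 * s 0 + s 1 * s 1 + s 2 * s 2))
  have B := ((((h0.const_mul (s 0)).add (h1.const_mul (s 1))).add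
    (h2.const_mul (s 2))).const_add s0).mul_const
      (s0 + (s 0 * v0 0 + s 1 * v0 1 + s 2 * v0 2))
  exact A.sub B

lemma hasDerivAt_cross {f g : ℝ → Fin 3 → ℝ} {f' g' : Fin 3 → ℝ} {t : ℝ}
    (hf : HasDerivAt f f' t) (hg : HasDerivAt g g' t) :
    HasDerivAt (fun τ => crossProduct (f τ) (g τ))
      (crossProduct f' (g t) + crossProduct (f t) g') t := by
  have f0 := hasDerivAt_pi.1 hf 0
  have f1 := hasDerivAt_pi.1 hf 1
  have f2 := hasDerivAt_pi.1 hf 2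
  have g0 := hasDerivAt_pi.1 hg 0
  have g1 := hasDerivAt_pi.1 hg 1
  have g2 := hasDerivAt_pi.1 hg 2
  rw [hasDerivAt_pi]
  intro a
  fin_cases a
  · convert (f1.mul g2).sub (f2.mul g1) using 1
    · funext τ; simp [cross_apply]
    · simp [cross_apply]; ring
  · convert (f2.mul g0).sub (f0.mul g2) using 1
    · funext τ; simp [cross_apply]
    · simp [cross_apply]; ring
  · convert (f0.mul g1).sub (f1.mul g0) using 1
    · funext τ; simp [cross_apply]
    · simp [cross_apply]; ring

lemma hasDerivAt_qv {s0 : ℝ} {s v0 : Fin 3 → ℝ} {g : ℝ → Fin 3 → ℝ} {w : Fin 3 → ℝ} {t : ℝ}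
    (h : HasDerivAt g w t) : HasDerivAt (fun τ => qv s0 s v0 (g τ)) (dqv s0 s v0 w) t := by
  have := hasDerivAt_cross ((h.const_smul s0).const_sub s) (h.const_sub v0)
  refine this.congr_deriv ?_
  funext a
  fin_cases a <;> simp [dqv, cross_apply] <;> ring

lemma hasDerivAt_pot {s0 : ℝ} {s v0 : Fin 3 → ℝ} {g : ℝ → Fin 3 → ℝ} {w : Fin 3 → ℝ} {t : ℝ}
    (h : HasDerivAt g w t) (hD : 0 < sDelta s0 s (g t)) (hK : 0 < kap s0 s v0 (g t))
    (a : Fin 3) :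
    HasDerivAt (fun τ => pot s0 s v0 (g τ) a) (dpot s0 s v0 (g t) w a) t := by
  have hq := hasDerivAt_pi.1 (hasDerivAt_qv (s0 := s0) (s := s) (v0 := v0) h) a
  have hR := (hasDerivAt_sDelta (s0 := s0) (s := s) h).sqrt hD.ne'
  have hb := hasDerivAt_bet (s0 := s0) (s := s) (v0 := v0) h
  have hk := (hR.mul_const (√(sDelta s0 s v0))).add hb
  exact hq.div (hR.mul hk) (mul_pos (Real.sqrt_pos.2 hD) hK).ne'

lemma poly1 (s0 : ℝ) (s v0 v w : Fin 3 → ℝ) (a : Fin 3) :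
    sDelta s0 s v * (dqv s0 s v0 w a - ∑ b, dqv s0 s v0 (Pi.single a 1) b * w b)
      - (qv s0 s v0 v a * dDel s0 s v w - ∑ b, qv s0 s v0 v b * dDel s0 s v (Pi.single a 1) * w b)
      = 2 * bet s0 s v0 v * crossProduct w (s - s0 • v) a := by
  fin_cases a <;>
  simp [sDelta, dqv, qv, dDel, bet, cross_apply, dotProduct, Fin.sum_univ_three, Pi.single_apply]
    <;> ring

lemma poly2 (s0 : ℝ) (s v0 v w : Fin 3 → ℝ) (a : Fin 3) :
    bet s0 s v0 v *
      (qv s0 s v0 v a * dDel s0 s v w - ∑ b, qv s0 s v0 v b * dDel s0 s v (Pi.single a 1) * w b) / 2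
      - sDelta s0 s v *
      (qv s0 s v0 v a * dBet s0 s v0 w - ∑ b, qv s0 s v0 v b * dBet s0 s v0 (Pi.single a 1) * w b)
      = (sDelta s0 s v * sDelta s0 s v0 - bet s0 s v0 v ^ 2) * crossProduct w (s - s0 • v) a := by
  fin_cases a <;>
  simp [sDelta, dBet, qv, dDel, bet, cross_apply, dotProduct, Fin.sum_univ_three, Pi.single_apply]
    <;> ring

lemma curl_pot (s0 : ℝ) (s v0 v w : Fin 3 → ℝ) (a : Fin 3)
    (hD : 0 < sDelta s0 s v) (hD0 : 0 < sDelta s0 s v0) (hK : 0 < kap s0 s v0 v) :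
    dpot s0 s v0 v w a - ∑ b, dpot s0 s v0 v (Pi.single a 1) b * w b
      = (√(sDelta s0 s v) ^ 3)⁻¹ * crossProduct w (s - s0 • v) a := by
  have h1 := poly1 s0 s v0 v w a
  have h2 := poly2 s0 s v0 v w a
  have hR := Real.sqrt_pos.2 hD
  have hR2 := Real.sq_sqrt hD.le
  have hr2 := Real.sq_sqrt hD0.le
  have hk : kap s0 s v0 v = √(sDelta s0 s v) * √(sDelta s0 s v0) + bet s0 s v0 v := rfl
  simp only [dpot, Fin.sum_univ_three] at h1 h2 ⊢
  rw [← hR2, ← hr2] at h2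
  rw [← hR2] at h1
  generalize √(sDelta s0 s v) = R at *
  generalize √(sDelta s0 s v0) = r at *
  generalize kap s0 s v0 v = K at *
  generalize crossProduct w (s - s0 • v) a = W at *
  generalize dDel s0 s v w = x1 at *
  generalize dDel s0 s v (Pi.single a 1) = x2 at *
  generalize dBet s0 s v0 w = x3 at *
  generalize dBet s0 s v0 (Pi.single a 1) = x4 at *
  generalize dqv s0 s v0 w a = x5 at *
  generalize dqv s0 s v0 (Pi.single a 1) = x6 at *
  generalize qv s0 s v0 v = x7 at *
  generalize bet s0 s v0 v = B at *
  field_simp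
  subst hk
  linear_combination 2 * (R * r + B) * h1 + 2 * h2

/-- Euler–Poisson expressions of a Lagrangian affine in the acceleration. -/
lemma eulerPoisson_affine {V : Set (Fin 3 → ℝ)} (hV : IsOpen V)
    {p : (Fin 3 → ℝ) → Fin 3 → ℝ} {l : (Fin 3 → ℝ) → ℝ}
    (hp : ContDiffOn ℝ (⊤ : ℕ∞) p V) (hl : ContDiffOn ℝ (⊤ : ℕ∞) l V)
    {I : Set ℝ} (hI : IsOpen I) {c : ℝ → Fin 3 → ℝ} (hc : ContDiffOn ℝ (⊤ : ℕ∞) c I)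
    (hcV : ∀ t ∈ I, deriv c t ∈ V) {t : ℝ} (ht : t ∈ I) (a : Fin 3)
    (G : (Fin 3 → ℝ) → (Fin 3 → ℝ) → ℝ)
    (hG : ∀ v ∈ V, ∀ w, fderiv ℝ p v w a - ∑ b, fderiv ℝ p v (Pi.single a 1) b * w b
      - fderiv ℝ l v (Pi.single a 1) = G v w) :
    eulerPoisson (fun _ _ v w => ∑ b, p v b * w b + l v) c t a
      = deriv (fun τ => G (deriv c τ) (deriv (deriv c) τ)) t := by
  have hc1 : ContDiffOn ℝ (⊤ : ℕ∞) (deriv c) I := hc.deriv_of_isOpen hI (by simp)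
  have hc2 : ContDiffOn ℝ (⊤ : ℕ∞) (deriv (deriv c)) I := hc1.deriv_of_isOpen hI (by simp)
  have hfp : ContDiffOn ℝ (⊤ : ℕ∞) (fderiv ℝ p) V := hp.fderiv_of_isOpen hV (by simp)
  have hfl : ContDiffOn ℝ (⊤ : ℕ∞) (fderiv ℝ l) V := hl.fderiv_of_isOpen hV (by simp)
  have hpd : ∀ v ∈ V, DifferentiableAt ℝ p v := fun v hv =>
    (hp.contDiffAt (hV.mem_nhds hv)).differentiableAt (by simp)
  have hld : ∀ v ∈ V, DifferentiableAt ℝ l v := fun v hv =>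
    (hl.contDiffAt (hV.mem_nhds hv)).differentiableAt (by simp)
  have hline : ∀ v : Fin 3 → ℝ,
      HasDerivAt (fun s : ℝ => v + s • (Pi.single a 1 : Fin 3 → ℝ)) (Pi.single a 1) 0 := by
    intro v
    simpa using ((hasDerivAt_id (0 : ℝ)).smul_const (Pi.single a 1 : Fin 3 → ℝ)).const_add v
  have hpv : ∀ v ∈ V, ∀ t x w, pLv a (fun _ _ v w => ∑ b, p v b * w b + l v) t x v w
      = ∑ b, fderiv ℝ p v (Pi.single a 1) b * w b + fderiv ℝ l v (Pi.single a 1) := by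
    intro v hv t x w
    have hv0 : v + (0 : ℝ) • (Pi.single a 1 : Fin 3 → ℝ) = v := by simp
    have h1 : HasFDerivAt p (fderiv ℝ p v) (v + (0 : ℝ) • (Pi.single a 1 : Fin 3 → ℝ)) := by
      rw [hv0]; exact (hpd v hv).hasFDerivAt
    have h2 : HasFDerivAt l (fderiv ℝ l v) (v + (0 : ℝ) • (Pi.single a 1 : Fin 3 → ℝ)) := by
      rw [hv0]; exact (hld v hv).hasFDerivAt
    have h3 := hasDerivAt_pi.1 (h1.comp_hasDerivAt (0 : ℝ) (hline v))
    have h4 := h2.comp_hasDerivAt (0 : ℝ) (hline v)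
    exact ((HasDerivAt.fun_sum fun b _ => (h3 b).mul_const (w b)).add h4).deriv
  have hpw : ∀ t x v w, pLw a (fun _ _ v w => ∑ b, p v b * w b + l v) t x v w = p v a := by
    intro t x v w
    have h3 := hasDerivAt_pi.1 (hline w)
    have := ((HasDerivAt.fun_sum (u := Finset.univ)
      fun b _ => (h3 b).const_mul (p v b)).add_const (l v)).deriv
    refine this.trans ?_
    simp [Pi.single_apply]
  have hpx : ∀ t x v w, pLx a (fun _ _ v w => ∑ b, p v b * w b + l v) t x v w = 0 := by
    intro t x v w
    simp [pLx]
  have hct : ∀ τ ∈ I, HasDerivAt (deriv c) (deriv (deriv c) τ) τ := fun τ hτ =>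
    ((hc1.contDiffAt (hI.mem_nhds hτ)).differentiableAt (by simp)).hasDerivAt
  have hdp : ∀ τ ∈ I, deriv (fun τ => p (deriv c τ) a) τ
      = fderiv ℝ p (deriv c τ) (deriv (deriv c) τ) a := by
    intro τ hτ
    exact (hasDerivAt_pi.1 ((hpd _ (hcV τ hτ)).hasFDerivAt.comp_hasDerivAt τ (hct τ hτ)) a).deriv
  have hmaps : Set.MapsTo (deriv c) I V := hcV
  have hfpc : ContDiffOn ℝ (⊤ : ℕ∞) (fun τ => fderiv ℝ p (deriv c τ)) I := hfp.comp hc1 hmaps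
  have hflc : ContDiffOn ℝ (⊤ : ℕ∞) (fun τ => fderiv ℝ l (deriv c τ)) I := hfl.comp hc1 hmaps
  have d1 : DifferentiableAt ℝ
      (fun τ => fderiv ℝ p (deriv c τ) (deriv (deriv c) τ) a) t := by
    have := (hfpc.clm_apply hc2).contDiffAt (hI.mem_nhds ht)
    exact differentiableAt_pi.1 (this.differentiableAt (by simp)) a
  have d2 : DifferentiableAt ℝ
      (fun τ => ∑ b, fderiv ℝ p (deriv c τ) (Pi.single a 1) b * deriv (deriv c) τ b
        + fderiv ℝ l (deriv c τ) (Pi.single a 1)) t := by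
    have e1 := (((hfpc.clm_apply contDiffOn_const).contDiffAt
      (hI.mem_nhds ht)).differentiableAt (by simp) :
      DifferentiableAt ℝ (fun τ => fderiv ℝ p (deriv c τ) (Pi.single a 1)) t)
    have e2 := (((hflc.clm_apply contDiffOn_const).contDiffAt
      (hI.mem_nhds ht)).differentiableAt (by simp) :
      DifferentiableAt ℝ (fun τ => fderiv ℝ l (deriv c τ) (Pi.single a 1)) t)
    have e3 := (hc2.contDiffAt (hI.mem_nhds ht)).differentiableAt (by simp)
    refine DifferentiableAt.add (DifferentiableAt.fun_sum fun b _ => ?_) e2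
    exact (differentiableAt_pi.1 e1 b).mul (differentiableAt_pi.1 e3 b)
  unfold eulerPoisson
  have ev : ∀ᶠ τ in nhds t, τ ∈ I := hI.mem_nhds ht
  have E1 : deriv (fun τ => pLv a (fun _ _ v w => ∑ b, p v b * w b + l v) τ (c τ) (deriv c τ)
      (deriv (deriv c) τ)) t = deriv (fun τ => ∑ b, fderiv ℝ p (deriv c τ) (Pi.single a 1) b *
      deriv (deriv c) τ b + fderiv ℝ l (deriv c τ) (Pi.single a 1)) t := by
    apply Filter.EventuallyEq.deriv_eq
    filter_upwards [ev] with τ hτ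
    exact hpv _ (hcV τ hτ) _ _ _
  have E2 : deriv (deriv (fun τ => pLw a (fun _ _ v w => ∑ b, p v b * w b + l v) τ (c τ)
      (deriv c τ) (deriv (deriv c) τ))) t
      = deriv (fun τ => fderiv ℝ p (deriv c τ) (deriv (deriv c) τ) a) t := by
    simp only [hpw]
    apply Filter.EventuallyEq.deriv_eq
    filter_upwards [ev] with τ hτ
    exact hdp τ hτ
  rw [hpx, E1, E2, zero_sub, neg_add_eq_sub, ← deriv_fun_sub d1 d2]
  apply Filter.EventuallyEq.deriv_eq
  filter_upwards [ev] with τ hτ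
  rw [← hG _ (hcV τ hτ)]
  ring

lemma rpow_three_half {D : ℝ} (hD : 0 ≤ D) : D ^ ((3 : ℝ) / 2) = √D ^ 3 := by
  rw [Real.sqrt_eq_rpow, ← Real.rpow_natCast, ← Real.rpow_mul hD]; norm_num

lemma rpow_five_half {D : ℝ} (hD : 0 ≤ D) : D ^ ((5 : ℝ) / 2) = √D ^ 5 := by
  rw [Real.sqrt_eq_rpow, ← Real.rpow_natCast, ← Real.rpow_mul hD]; norm_num

lemma one_add_dot_pos (v : Fin 3 → ℝ) : 0 < 1 + v ⬝ᵥ v := by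
  simp only [dotProduct, Fin.sum_univ_three]
  nlinarith [mul_self_nonneg (v 0), mul_self_nonneg (v 1), mul_self_nonneg (v 2)]

lemma hasDerivAt_normsq {g : ℝ → Fin 3 → ℝ} {w : Fin 3 → ℝ} {t : ℝ}
    (h : HasDerivAt g w t) : HasDerivAt (fun τ => 1 + g τ ⬝ᵥ g τ) (2 * (w ⬝ᵥ g t)) t := by
  have h0 := hasDerivAt_pi.1 h 0
  have h1 := hasDerivAt_pi.1 h 1
  have h2 := hasDerivAt_pi.1 h 2
  simp only [dotProduct, Fin.sum_univ_three]
  refine ((((h0.mul h0).add (h1.mul h1)).add (h2.mul h2)).const_add 1).congr_deriv ?_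
  ring

/-- The momentum-like quantity whose time derivative is (35). -/
def momG (s0 : ℝ) (s : Fin 3 → ℝ) (M : ℝ) (a : Fin 3) (v w : Fin 3 → ℝ) : ℝ :=
  (√(sDelta s0 s v) ^ 3)⁻¹ * crossProduct w (s - s0 • v) a + M * (v a / √(1 + v ⬝ᵥ v))

lemma hasDerivAt_momG (s0 : ℝ) (s : Fin 3 → ℝ) (m : ℝ) (a : Fin 3) {g g1 : ℝ → Fin 3 → ℝ}
    {w : Fin 3 → ℝ} {t : ℝ} (hg : HasDerivAt g (g1 t) t) (hg1 : HasDerivAt g1 w t)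
    (hD : 0 < sDelta s0 s (g t)) :
    HasDerivAt (fun τ => momG s0 s (m / (s0 ^ 2 + s ⬝ᵥ s) ^ ((3 : ℝ) / 2)) a (g τ) (g1 τ))
      (spinE s0 s m (g t) (g1 t) w a) t := by
  have hN := one_add_dot_pos (g t)
  have hR := (hasDerivAt_sDelta (s0 := s0) (s := s) hg).sqrt hD.ne'
  have hRp := Real.sqrt_pos.2 hD
  have hNp := Real.sqrt_pos.2 hN
  have hQ := (hasDerivAt_normsq hg).sqrt hN.ne'
  have hX := hasDerivAt_pi.1 (hasDerivAt_cross hg1 ((hg.const_smul s0).const_sub s)) a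
  have hga := hasDerivAt_pi.1 hg a
  have hR3 : √(sDelta s0 s (g t)) ^ 3 ≠ 0 := (pow_pos hRp 3).ne'
  have key := (((hR.pow 3).inv hR3).mul hX).add
    ((hga.div hQ hNp.ne').const_mul (m / (s0 ^ 2 + s ⬝ᵥ s) ^ ((3 : ℝ) / 2)))
  refine key.congr_deriv ?_
  have hcr : crossProduct (g1 t) (-(s0 • g1 t)) = 0 := by
    rw [← smul_neg, ← neg_smul_neg]
    simp
  rw [hcr]
  unfold spinE
  rw [rpow_three_half hD.le, rpow_five_half hD.le, rpow_three_half hN.le]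
  have hN2 := Real.sq_sqrt hN.le
  simp only [Pi.add_apply, Pi.sub_apply, Pi.smul_apply, smul_eq_mul, Pi.zero_apply, add_zero,
    dDel, Pi.pow_apply, Pi.inv_apply]
  clear key hR hQ hX hga hcr
  generalize √(1 + g t ⬝ᵥ g t) = N at *
  generalize √(sDelta s0 s (g t)) = R at *
  rw [← hN2]
  rw [div_mul_eq_div_div_swap m]
  generalize m / (s0 ^ 2 + s ⬝ᵥ s) ^ ((3 : ℝ) / 2) = T at *
  generalize crossProduct w (s - s0 • g t) a = y1
  generalize crossProduct (g1 t) (s - s0 • g t) a = y2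
  field_simp
  ring

/-- The domain of the potential. -/
def dom (s0 : ℝ) (s v0 : Fin 3 → ℝ) : Set (Fin 3 → ℝ) :=
  {v | 0 < sDelta s0 s v ∧ 0 < kap s0 s v0 v}

/-- The kinetic part of the Lagrangian. -/
def kin (M : ℝ) (v : Fin 3 → ℝ) : ℝ := - M * √(1 + v ⬝ᵥ v)

lemma contDiff_sDelta (s0 : ℝ) (s : Fin 3 → ℝ) : ContDiff ℝ (⊤ : ℕ∞) (sDelta s0 s) := by
  unfold sDelta
  simp only [dotProduct, Fin.sum_univ_three]
  fun_prop

lemma contDiff_bet (s0 : ℝ) (s v0 : Fin 3 → ℝ) : ContDiff ℝ (⊤ : ℕ∞) (bet s0 s v0) := by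
  unfold bet
  simp only [dotProduct, Fin.sum_univ_three]
  fun_prop

lemma contDiff_qv (s0 : ℝ) (s v0 : Fin 3 → ℝ) (a : Fin 3) :
    ContDiff ℝ (⊤ : ℕ∞) (fun v => qv s0 s v0 v a) := by
  unfold qv
  fin_cases a <;> simp [cross_apply] <;> fun_prop

lemma isOpen_dom (s0 : ℝ) (s v0 : Fin 3 → ℝ) : IsOpen (dom s0 s v0) := by
  have h1 := (contDiff_sDelta s0 s).continuous
  have h2 := (contDiff_bet s0 s v0).continuous
  have h3 : Continuous (kap s0 s v0) := by unfold kap; fun_prop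
  exact (isOpen_lt continuous_const h1).inter (isOpen_lt continuous_const h3)

lemma mem_dom_self {s0 : ℝ} {s v0 : Fin 3 → ℝ} (h : 0 < sDelta s0 s v0) :
    v0 ∈ dom s0 s v0 := by
  refine ⟨h, ?_⟩
  have : bet s0 s v0 v0 = sDelta s0 s v0 := by unfold bet sDelta; ring
  unfold kap
  rw [this]
  positivity

lemma contDiffOn_pot (s0 : ℝ) (s v0 : Fin 3 → ℝ) :
    ContDiffOn ℝ (⊤ : ℕ∞) (pot s0 s v0) (dom s0 s v0) := by
  rw [contDiffOn_pi]
  intro a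
  have hR : ContDiffOn ℝ (⊤ : ℕ∞) (fun v => √(sDelta s0 s v)) (dom s0 s v0) :=
    (contDiff_sDelta s0 s).contDiffOn.sqrt fun v hv => hv.1.ne'
  have hK : ContDiffOn ℝ (⊤ : ℕ∞) (kap s0 s v0) (dom s0 s v0) :=
    (hR.mul contDiffOn_const).add (contDiff_bet s0 s v0).contDiffOn
  exact (contDiff_qv s0 s v0 a).contDiffOn.div (hR.mul hK)
    fun v hv => (mul_pos (Real.sqrt_pos.2 hv.1) hv.2).ne'

lemma contDiffOn_kin (M : ℝ) (V : Set (Fin 3 → ℝ)) : ContDiffOn ℝ (⊤ : ℕ∞) (kin M) V := by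
  have h : ContDiff ℝ (⊤ : ℕ∞) (fun v : Fin 3 → ℝ => 1 + v ⬝ᵥ v) := by
    simp only [dotProduct, Fin.sum_univ_three]
    fun_prop
  exact contDiffOn_const.mul (h.contDiffOn.sqrt fun v _ => (one_add_dot_pos v).ne')

/-- The third-order equation of motion (35) of the semi-classical
spinning particle is locally variational: around every point of the domain
`{Δ(v) > 0}` there is a second-order Lagrange function `L(t,x,v,v′)` whose
Euler–Poisson expressions reproduce (35). -/
theorem spinning_particle_locally_variational
    (s0 : ℝ) (s : Fin 3 → ℝ) (hs : (s0, s) ≠ 0) (m : ℝ) :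
    ∀ t₀ : ℝ, ∀ x₀ v₀ v'₀ : Fin 3 → ℝ, 0 < sDelta s0 s v₀ →
    ∃ U : Set (ℝ × (Fin 3 → ℝ) × (Fin 3 → ℝ) × (Fin 3 → ℝ)),
      IsOpen U ∧ (t₀, x₀, v₀, v'₀) ∈ U ∧ (∀ p ∈ U, 0 < sDelta s0 s p.2.2.1) ∧
      ∃ L : ℝ → (Fin 3 → ℝ) → (Fin 3 → ℝ) → (Fin 3 → ℝ) → ℝ,
        ContDiffOn ℝ (⊤ : ℕ∞)
          (fun p : ℝ × (Fin 3 → ℝ) × (Fin 3 → ℝ) × (Fin 3 → ℝ) =>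
            L p.1 p.2.1 p.2.2.1 p.2.2.2) U ∧
        ∀ I : Set ℝ, IsOpen I → ∀ c : ℝ → (Fin 3 → ℝ), ContDiffOn ℝ (⊤ : ℕ∞) c I →
          (∀ t ∈ I, (t, c t, deriv c t, deriv (deriv c) t) ∈ U) →
          ∀ t ∈ I, ∀ a : Fin 3,
            eulerPoisson L c t a
              = spinE s0 s m (deriv c t) (deriv (deriv c) t)
                  (deriv (deriv (deriv c)) t) a := by
  intro t₀ x₀ v₀ v'₀ h0
  have hVo := isOpen_dom s0 s v₀
  refine ⟨{p | p.2.2.1 ∈ dom s0 s v₀}, hVo.preimage (by fun_prop), mem_dom_self h0,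
    fun p hp => hp.1, ?_⟩
  have hp := contDiffOn_pot s0 s v₀
  have hl := contDiffOn_kin (m / (s0 ^ 2 + s ⬝ᵥ s) ^ ((3 : ℝ) / 2)) (dom s0 s v₀)
  refine ⟨fun _ _ v w => ∑ b, pot s0 s v₀ v b * w b
    + kin (m / (s0 ^ 2 + s ⬝ᵥ s) ^ ((3 : ℝ) / 2)) v, ?_, ?_⟩
  · have hm : Set.MapsTo (fun p : ℝ × (Fin 3 → ℝ) × (Fin 3 → ℝ) × (Fin 3 → ℝ) => p.2.2.1)
      {p | p.2.2.1 ∈ dom s0 s v₀} (dom s0 s v₀) := fun p hp => hp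
    have hpr : ContDiff ℝ (⊤ : ℕ∞)
      (fun p : ℝ × (Fin 3 → ℝ) × (Fin 3 → ℝ) × (Fin 3 → ℝ) => p.2.2.1) := by fun_prop
    have a1 := hp.comp hpr.contDiffOn hm
    have a2 := hl.comp hpr.contDiffOn hm
    refine ContDiffOn.add (ContDiffOn.sum fun b _ => ?_) a2
    refine (contDiffOn_pi.1 a1 b).mul (ContDiff.contDiffOn ?_)
    fun_prop
  · intro I hI c hc hcU t ht a
    have hc1 : ContDiffOn ℝ (⊤ : ℕ∞) (deriv c) I := hc.deriv_of_isOpen hI (by simp)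
    have hc2 : ContDiffOn ℝ (⊤ : ℕ∞) (deriv (deriv c)) I := hc1.deriv_of_isOpen hI (by simp)
    have hcV : ∀ t ∈ I, deriv c t ∈ dom s0 s v₀ := fun t ht => hcU t ht
    rw [eulerPoisson_affine hVo hp hl hI hc hcV ht a
      (momG s0 s (m / (s0 ^ 2 + s ⬝ᵥ s) ^ ((3 : ℝ) / 2)) a)]
    · exact (hasDerivAt_momG s0 s m a
        ((hc1.contDiffAt (hI.mem_nhds ht)).differentiableAt (by simp)).hasDerivAt
        ((hc2.contDiffAt (hI.mem_nhds ht)).differentiableAt (by simp)).hasDerivAt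
        (hcV t ht).1).deriv
    · intro v hv w
      have hpd : DifferentiableAt ℝ (pot s0 s v₀) v :=
        (hp.contDiffAt (hVo.mem_nhds hv)).differentiableAt (by simp)
      have hld : DifferentiableAt ℝ (kin (m / (s0 ^ 2 + s ⬝ᵥ s) ^ ((3 : ℝ) / 2))) v :=
        (hl.contDiffAt (hVo.mem_nhds hv)).differentiableAt (by simp)
      have hline : ∀ w : Fin 3 → ℝ, HasDerivAt (fun s : ℝ => v + s • w) w 0 := by
        intro w
        simpa using ((hasDerivAt_id (0 : ℝ)).smul_const w).const_add v
      have hv0 : ∀ w : Fin 3 → ℝ, v + (0 : ℝ) • w = v := by simp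
      have f1 : ∀ w a, fderiv ℝ (pot s0 s v₀) v w a = dpot s0 s v₀ v w a := by
        intro w a
        have h1 : HasFDerivAt (pot s0 s v₀) (fderiv ℝ (pot s0 s v₀) v) (v + (0 : ℝ) • w) := by
          rw [hv0]; exact hpd.hasFDerivAt
        have h3 := hasDerivAt_pi.1 (h1.comp_hasDerivAt (0 : ℝ) (hline w)) a
        have h4 := hasDerivAt_pot (s0 := s0) (s := s) (v0 := v₀) (hline w)
          (by rw [hv0]; exact hv.1) (by rw [hv0]; exact hv.2) a
        rw [hv0] at h4
        exact h3.unique h4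
      have f2 : fderiv ℝ (kin (m / (s0 ^ 2 + s ⬝ᵥ s) ^ ((3 : ℝ) / 2))) v (Pi.single a 1)
          = - (m / (s0 ^ 2 + s ⬝ᵥ s) ^ ((3 : ℝ) / 2)) * (v a / √(1 + v ⬝ᵥ v)) := by
        have h1 : HasFDerivAt (kin (m / (s0 ^ 2 + s ⬝ᵥ s) ^ ((3 : ℝ) / 2)))
            (fderiv ℝ (kin (m / (s0 ^ 2 + s ⬝ᵥ s) ^ ((3 : ℝ) / 2))) v)
            (v + (0 : ℝ) • (Pi.single a 1 : Fin 3 → ℝ)) := by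
          rw [hv0]; exact hld.hasFDerivAt
        have h3 := h1.comp_hasDerivAt (0 : ℝ) (hline (Pi.single a 1))
        have h4 := ((hasDerivAt_normsq (hline (Pi.single a 1))).sqrt
          (one_add_dot_pos _).ne').const_mul (- (m / (s0 ^ 2 + s ⬝ᵥ s) ^ ((3 : ℝ) / 2)))
        rw [hv0] at h4
        rw [h3.unique h4, single_one_dotProduct, mul_div_mul_left _ _ two_ne_zero]
      simp only [f1]
      rw [curl_pot s0 s v₀ v w a hv.1 h0 hv.2, f2, momG]
      ring

end
end

section
/- Pseudo-orthogonal covariance of the Euler–Poisson equations (36): let 𝓔 be as in the context. For every Λ ∈ GL(4,ℝ) with Λᵀ η Λ = η (η regarded as the matrix diag(1,−1,−1,−1)) and det Λ = 1, and for all (s, u, u̇, ü) in the domain, one has 𝓔_ρ(Λs; Λu, Λu̇, Λü) = Σ_σ (Λ⁻¹)^σ{}_ρ · 𝓔_σ(s; u, u̇, ü). Consequently, for every such Λ a smooth curve γ : I → ℝ⁴ satisfies 𝓔_ρ(s; γ̇, γ̈, γ⃛) = 0 on I if and only if the transformed curve Λ∘γ satisfies 𝓔_ρ(Λs; (Λγ)˙,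 (Λγ)¨, (Λγ)⃛) = 0 on I: the equations (36) are invariant under the special pseudo-orthogonal group acting simultaneously on the world-line and on the spin four-vector s. -/
noncomputable section

/-- The pseudo-Euclidean bilinear form `η(a,b) = a⁰b⁰ − a¹b¹ − a²b² − a³b³` on `ℝ⁴`. -/
def etaB (a b : Fin 4 → ℝ) : ℝ :=
  a 0 * b 0 - a 1 * b 1 - a 2 * b 2 - a 3 * b 3

/-- `‖a‖ = |η(a,a)|^{1/2}`. -/
def etaNorm (a : Fin 4 → ℝ) : ℝ :=
  Real.sqrt |etaB a a|

/-- `(a∧b)·(c∧d) = η(a,c)η(b,d) − η(a,d)η(b,c)`. -/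
def wedgeDot (a b c d : Fin 4 → ℝ) : ℝ :=
  etaB a c * etaB b d - etaB a d * etaB b c

/-- `‖a∧b‖ = |η(a,a)η(b,b) − η(a,b)²|^{1/2}`. -/
def wedgeNorm (a b : Fin 4 → ℝ) : ℝ :=
  Real.sqrt |etaB a a * etaB b b - etaB a b ^ 2|

/-- The Levi-Civita permutation symbol `e_{ρμνσ}` on four indices, with `e_{0123} = 1`,
realized as the determinant of the matrix of corresponding standard basis rows. -/
def leviCivita (ρ μ ν σ : Fin 4) : ℝ :=
  Matrix.det (Matrix.of fun i j => if ![ρ, μ, ν, σ] i = j then (1 : ℝ) else 0)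

/-- `[∗(a∧b∧c)]_ρ = Σ_{μ,ν,σ} e_{ρμνσ} a^μ b^ν c^σ`. -/
def starWedge (a b c : Fin 4 → ℝ) (ρ : Fin 4) : ℝ :=
  ∑ μ, ∑ ν, ∑ σ, leviCivita ρ μ ν σ * a μ * b ν * c σ

/-- Index lowering by `η` : `(a♭)_ρ`. -/
def lowerIdx (a : Fin 4 → ℝ) (ρ : Fin 4) : ℝ :=
  if ρ = 0 then a 0 else -(a ρ)

/-- The covector-valued expression (36) of the relativistic spinning particle:
`𝓔_ρ(s; u, u̇, ü) = [∗(ü∧u∧s)]_ρ/‖s∧u‖³ − 3 [∗(u̇∧u∧s)]_ρ ((u̇∧s)·(u∧s))/‖s∧u‖⁵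
 + (m/‖s‖³)((u̇♭)_ρ/‖u‖ − η(u̇,u)(u♭)_ρ/‖u‖³)`. -/
def spinE4 (m : ℝ) (s u u' u'' : Fin 4 → ℝ) (ρ : Fin 4) : ℝ :=
  starWedge u'' u s ρ / wedgeNorm s u ^ 3
    - 3 * starWedge u' u s ρ * wedgeDot u' s u s / wedgeNorm s u ^ 5
    + m / etaNorm s ^ 3 *
        (lowerIdx u' ρ / etaNorm u - etaB u' u * lowerIdx u ρ / etaNorm u ^ 3)

/-- The matrix `diag(1,−1,−1,−1)` of the bilinear form `η`. -/
def etaMatrix : Matrix (Fin 4) (Fin 4) ℝ :=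
  Matrix.diagonal ![1, -1, -1, -1]

open Matrix in
lemma lower_eq (a : Fin 4 → ℝ) : lowerIdx a = etaMatrix *ᵥ a := by
  funext ρ
  fin_cases ρ <;> simp [lowerIdx, etaMatrix, Matrix.mulVec_diagonal]

open Matrix in
lemma etaB_eq (a b : Fin 4 → ℝ) : etaB a b = a ⬝ᵥ (etaMatrix *ᵥ b) := by
  simp [etaB, etaMatrix, dotProduct, Matrix.mulVec_diagonal, Fin.sum_univ_four]
  ring

open Matrix in
lemma etaB_inv (Λ : Matrix (Fin 4) (Fin 4) ℝ)
    (hΛ : Λ.transpose * etaMatrix * Λ = etaMatrix) (a b : Fin 4 → ℝ) :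
    etaB (Λ *ᵥ a) (Λ *ᵥ b) = etaB a b := by
  rw [etaB_eq, etaB_eq]
  conv_rhs => rw [← hΛ, ← Matrix.mulVec_mulVec, ← Matrix.mulVec_mulVec,
    Matrix.dotProduct_mulVec a, Matrix.vecMul_transpose]

open Matrix in
lemma lower_inv (Λ : Matrix (Fin 4) (Fin 4) ℝ)
    (hΛ : Λ.transpose * etaMatrix * Λ = etaMatrix) (hdet : Λ.det = 1) (a : Fin 4 → ℝ) (ρ : Fin 4) :
    lowerIdx (Λ *ᵥ a) ρ = ∑ σ, Λ⁻¹ σ ρ * lowerIdx a σ := by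
  have hu : IsUnit Λ.det := by simp [hdet]
  have h : lowerIdx (Λ *ᵥ a) = (Λ⁻¹)ᵀ *ᵥ lowerIdx a := by
    rw [lower_eq, lower_eq, ← hΛ, Matrix.mulVec_mulVec, Matrix.mulVec_mulVec]
    congr 1
    rw [← Matrix.mul_assoc, ← Matrix.mul_assoc, ← Matrix.transpose_mul,
      Matrix.mul_nonsing_inv _ hu, Matrix.transpose_one, Matrix.one_mul, hΛ]
  rw [h]
  simp [Matrix.mulVec, dotProduct]

lemma det_four_expand (M : Matrix (Fin 4) (Fin 4) ℝ) : M.det =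
    M 0 0 * (M 1 1 * (M 2 2 * M 3 3 - M 2 3 * M 3 2) - M 1 2 * (M 2 1 * M 3 3 - M 2 3 * M 3 1)
      + M 1 3 * (M 2 1 * M 3 2 - M 2 2 * M 3 1))
    - M 0 1 * (M 1 0 * (M 2 2 * M 3 3 - M 2 3 * M 3 2) - M 1 2 * (M 2 0 * M 3 3 - M 2 3 * M 3 0)
      + M 1 3 * (M 2 0 * M 3 2 - M 2 2 * M 3 0))
    + M 0 2 * (M 1 0 * (M 2 1 * M 3 3 - M 2 3 * M 3 1) - M 1 1 * (M 2 0 * M 3 3 - M 2 3 * M 3 0)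
      + M 1 3 * (M 2 0 * M 3 1 - M 2 1 * M 3 0))
    - M 0 3 * (M 1 0 * (M 2 1 * M 3 2 - M 2 2 * M 3 1) - M 1 1 * (M 2 0 * M 3 2 - M 2 2 * M 3 0)
      + M 1 2 * (M 2 0 * M 3 1 - M 2 1 * M 3 0)) := by
  rw [Matrix.det_succ_row_zero]
  simp [Fin.sum_univ_four, Matrix.det_fin_three, Fin.succAbove]
  ring

set_option maxHeartbeats 4000000 in
lemma star_det (v a b c : Fin 4 → ℝ) :
    ∑ σ, v σ * starWedge a b c σ = Matrix.det (Matrix.of ![v, a, b, c]) := by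
  simp only [starWedge, leviCivita, det_four_expand, Fin.sum_univ_four]
  simp
  ring

open Matrix in
lemma starWedge_covariant (Λ : Matrix (Fin 4) (Fin 4) ℝ) (hdet : Λ.det = 1) (a b c : Fin 4 → ℝ) (ρ : Fin 4) :
    starWedge (Λ *ᵥ a) (Λ *ᵥ b) (Λ *ᵥ c) ρ = ∑ σ, Λ⁻¹ σ ρ * starWedge a b c σ := by
  have hu : IsUnit Λ.det := by simp [hdet]
  have h1 : starWedge (Λ *ᵥ a) (Λ *ᵥ b) (Λ *ᵥ c) ρ
      = ∑ σ, (Pi.single ρ 1 : Fin 4 → ℝ) σ * starWedge (Λ *ᵥ a) (Λ *ᵥ b) (Λ *ᵥ c) σ := by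
    simp [Pi.single_apply]
  have h2 : (Pi.single ρ 1 : Fin 4 → ℝ) = Λ *ᵥ (fun σ => Λ⁻¹ σ ρ) := by
    have : (fun σ => Λ⁻¹ σ ρ) = Λ⁻¹ *ᵥ (Pi.single ρ 1) := by
      funext σ; simp
    rw [this, Matrix.mulVec_mulVec, Matrix.mul_nonsing_inv _ hu, Matrix.one_mulVec]
  rw [h1, star_det, star_det, h2]
  have h3 : (Matrix.of ![Λ *ᵥ (fun σ => Λ⁻¹ σ ρ), Λ *ᵥ a, Λ *ᵥ b, Λ *ᵥ c])
      = Matrix.of ![(fun σ => Λ⁻¹ σ ρ), a, b, c] * Λᵀ := by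
    ext i j
    fin_cases i <;> simp [Matrix.mul_apply, Matrix.mulVec, dotProduct, mul_comm]
  rw [h3, Matrix.det_mul, Matrix.det_transpose, hdet, mul_one]

lemma spin_inv (m : ℝ) (Λ : Matrix (Fin 4) (Fin 4) ℝ)
    (hΛ : Λ.transpose * etaMatrix * Λ = etaMatrix) (hdet : Λ.det = 1)
    (s u u' u'' : Fin 4 → ℝ) (ρ : Fin 4) :
    spinE4 m (Λ.mulVec s) (Λ.mulVec u) (Λ.mulVec u') (Λ.mulVec u'') ρ
          = ∑ σ : Fin 4, Λ⁻¹ σ ρ * spinE4 m s u u' u'' σ := by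
  simp only [spinE4, wedgeNorm, etaNorm, wedgeDot, etaB_inv Λ hΛ, starWedge_covariant Λ hdet,
    lower_inv Λ hΛ hdet, Fin.sum_univ_four]
  ring

lemma deriv_mulVec (Λ : Matrix (Fin 4) (Fin 4) ℝ) (hdet : Λ.det = 1) (γ : ℝ → (Fin 4 → ℝ)) :
    deriv (fun σ => Λ.mulVec (γ σ)) = fun τ => Λ.mulVec (deriv γ τ) := by
  have hu : IsUnit Λ.det := by simp [hdet]
  let e : (Fin 4 → ℝ) ≃L[ℝ] (Fin 4 → ℝ) :=
    (Matrix.toLin'OfInv (Matrix.nonsing_inv_mul _ hu)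
      (Matrix.mul_nonsing_inv _ hu)).toContinuousLinearEquiv
  have he : ∀ x, e x = Λ.mulVec x := fun x => Matrix.toLin'_apply _ _
  funext τ
  have := e.comp_fderiv (f := γ) (x := τ)
  have h2 : (fun σ => Λ.mulVec (γ σ)) = e ∘ γ := by funext σ; simp [he]
  rw [h2, ← fderiv_apply_one_eq_deriv, this, ← fderiv_apply_one_eq_deriv, ← he]
  rfl

/-- Pseudo-orthogonal covariance of the Euler–Poisson equations (36):
for every `Λ` in the special pseudo-orthogonal group (`Λᵀ η Λ = η`, `det Λ = 1`), the
expressions (36) transform as `𝓔_ρ(Λs; Λu, Λu̇, Λü) = Σ_σ (Λ⁻¹)^σ{}_ρ 𝓔_σ(s; u, u̇, ü)`;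
consequently a curve `γ` solves (36) for `s` iff `Λ∘γ` solves (36) for `Λs`: the
equations (36) are invariant under the special pseudo-orthogonal group acting
simultaneously on the world-line and on the spin four-vector. -/
theorem spinning_particle_pseudo_orthogonal_covariance
    (m : ℝ) (Λ : Matrix (Fin 4) (Fin 4) ℝ)
    (hΛ : Λ.transpose * etaMatrix * Λ = etaMatrix) (hdet : Λ.det = 1) :
    (∀ s u u' u'' : Fin 4 → ℝ, etaB s s < 0 → 0 < etaB u u →
      ∀ ρ : Fin 4,
        spinE4 m (Λ.mulVec s) (Λ.mulVec u) (Λ.mulVec u') (Λ.mulVec u'') ρ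
          = ∑ σ : Fin 4, Λ⁻¹ σ ρ * spinE4 m s u u' u'' σ) ∧
    (∀ s : Fin 4 → ℝ, etaB s s < 0 →
      ∀ I : Set ℝ, IsOpen I → ∀ γ : ℝ → (Fin 4 → ℝ), ContDiffOn ℝ (⊤ : ℕ∞) γ I →
      (∀ τ ∈ I, 0 < etaB (deriv γ τ) (deriv γ τ)) →
      ((∀ τ ∈ I, ∀ ρ : Fin 4,
          spinE4 m s (deriv γ τ) (deriv (deriv γ) τ)
            (deriv (deriv (deriv γ)) τ) ρ = 0) ↔
       (∀ τ ∈ I, ∀ ρ : Fin 4,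
          spinE4 m (Λ.mulVec s) (deriv (fun σ => Λ.mulVec (γ σ)) τ)
            (deriv (deriv (fun σ => Λ.mulVec (γ σ))) τ)
            (deriv (deriv (deriv (fun σ => Λ.mulVec (γ σ)))) τ) ρ = 0))) := by
  refine ⟨fun s u u' u'' _ _ ρ => spin_inv m Λ hΛ hdet s u u' u'' ρ, ?_⟩
  intro s _ I _ γ _ _
  have hu : IsUnit Λ.det := by simp [hdet]
  simp only [deriv_mulVec Λ hdet, spin_inv m Λ hΛ hdet]
  refine forall₂_congr fun τ _ => ⟨fun h ρ => by simp [h], fun h => ?_⟩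
  set F := spinE4 m s (deriv γ τ) (deriv (deriv γ) τ) (deriv (deriv (deriv γ)) τ) with hF
  have h0 : Matrix.vecMul F Λ⁻¹ = 0 := by
    funext ρ
    simpa [Matrix.vecMul, dotProduct, mul_comm] using h ρ
  have h1 : F = 0 := by
    have := congrArg (fun v => Matrix.vecMul v Λ) h0
    simpa [Matrix.vecMul_vecMul, Matrix.nonsing_inv_mul _ hu] using this
  intro ρ
  rw [h1]; rfl


end
end

section
/- Contraction identity for the spinning-particle Euler–Poisson expressions: let 𝓔 be as in the context. Then identically on its domain, Σ_{ρ=0}^{3} u^ρ · 𝓔_ρ(s; u, u̇, ü) = 0; i.e. the covector 𝓔 annihilates the velocity u, as must hold for the Euler–Poisson expressions of any parameter-invariant variational problem. -/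
noncomputable section

theorem leviCivita_swap (ρ μ ν σ : Fin 4) :
    leviCivita ν μ ρ σ = - leviCivita ρ μ ν σ := by
  unfold leviCivita
  have h := Matrix.det_permute (Equiv.swap (0 : Fin 4) 2)
    (Matrix.of fun i j => if ![ρ, μ, ν, σ] i = j then (1 : ℝ) else 0)
  rw [Equiv.Perm.sign_swap (by decide)] at h
  simp only [Units.val_neg, Units.val_one, Int.cast_neg, Int.cast_one, neg_mul, one_mul] at h
  rw [← h]
  congr 1
  ext i j
  fin_cases i <;> rfl

theorem starWedge_contract (a u c : Fin 4 → ℝ) :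
    ∑ ρ, u ρ * starWedge a u c ρ = 0 := by
  have key : ∑ ρ, u ρ * starWedge a u c ρ = - ∑ ρ, u ρ * starWedge a u c ρ := by
    have e : ∑ ρ, u ρ * starWedge a u c ρ
        = ∑ ρ, ∑ ν, ∑ μ, ∑ σ, leviCivita ρ μ ν σ * a μ * u ν * c σ * u ρ := by
      refine Finset.sum_congr rfl fun ρ _ => ?_
      unfold starWedge
      rw [Finset.sum_comm, mul_comm]
      simp only [Finset.sum_mul]
    rw [e]
    conv_lhs => rw [Finset.sum_comm]
    simp only [← Finset.sum_neg_distrib]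
    refine Finset.sum_congr rfl fun ρ _ => Finset.sum_congr rfl fun ν _ =>
      Finset.sum_congr rfl fun μ _ => Finset.sum_congr rfl fun σ _ => ?_
    rw [leviCivita_swap ρ μ ν σ]
    ring
  linarith

theorem lowerIdx_contract (a u : Fin 4 → ℝ) :
    ∑ ρ, u ρ * lowerIdx a ρ = etaB a u := by
  simp [Fin.sum_univ_four, lowerIdx, etaB]
  ring

/-- Contraction identity for the spinning-particle Euler–Poisson
expressions (36): identically on the domain `{η(s,s) < 0, η(u,u) > 0}`,
`Σ_ρ u^ρ 𝓔_ρ(s; u, u̇, ü) = 0`; the covector `𝓔` annihilates the velocity `u`, as must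
hold for the Euler–Poisson expressions of any parameter-invariant variational
problem. -/
theorem spinning_particle_contraction_identity (m : ℝ)
    (s u u' u'' : Fin 4 → ℝ) (hs : etaB s s < 0) (hu : 0 < etaB u u) :
    ∑ ρ : Fin 4, u ρ * spinE4 m s u u' u'' ρ = 0 := by
  have h1 := starWedge_contract u'' u s
  have h2 := starWedge_contract u' u s
  have h3 := lowerIdx_contract u' u
  have h4 := lowerIdx_contract u u
  have hn : etaNorm u ^ 2 = etaB u u := by
    unfold etaNorm
    rw [Real.sq_sqrt (abs_nonneg _), abs_of_pos hu]
  have hn0 : etaNorm u ≠ 0 := by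
    intro h
    rw [h] at hn
    norm_num at hn
    linarith
  have e : ∑ ρ : Fin 4, u ρ * spinE4 m s u u' u'' ρ
      = (∑ ρ, u ρ * starWedge u'' u s ρ) / wedgeNorm s u ^ 3
        - 3 * (∑ ρ, u ρ * starWedge u' u s ρ) * wedgeDot u' s u s / wedgeNorm s u ^ 5
        + m / etaNorm s ^ 3 * ((∑ ρ, u ρ * lowerIdx u' ρ) / etaNorm u
          - etaB u' u * (∑ ρ, u ρ * lowerIdx u ρ) / etaNorm u ^ 3) := by
    simp only [Fin.sum_univ_four, spinE4]
    ring
  have h5 : etaB u' u / etaNorm u - etaB u' u * etaNorm u ^ 2 / etaNorm u ^ 3 = 0 := by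
    field_simp
    ring
  rw [e, h1, h2, h3, h4, ← hn, h5]
  ring

end
end
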